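/- There exists a real constant α > 1 such that Q(n)^{1/n} → α as n → ∞, and moreover for every ε with 0 < ε < 1/6 there is a constant K > 0 such that for all sufficiently large n, |log Q(n) − n·log α| ≤ K·n·exp(−√((1/6 − ε)·log n·log log n)). -/

import Mathlib

/-!
Write `log Q(n) = ∑_{k ≤ n} logStep k n`, where `logStep k n ∈ [0, log 2]` is the increment in the
logarithm of the number of primitive sets when `k` is adjoined to `{k + 1, …, n}`. This increment is
local (`logStep_mul`): if `k = d m` with `n < k T` and `m` free of primes below `T`, then every
divisibility relation inside `[k, n]` has quotient below `T`, hence coprime to `m`, so the multiples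
of `m` in `[k, n]` split off as a dilated copy of `[d, ⌊n / m⌋]`, and
`logStep k n = logStep d ⌊n / m⌋`.

Take `d` to be the `T`-smooth part of `k`. Discarding the `k ≤ n / T` and the `k` with smooth part
above `D` (`log_Q_sub_good`), and grouping the others by `d` and `N = ⌊n / m⌋`, leaves the problem of
counting the `T`-rough `m` in `(n / (N + 1), n / N]`. Brun's pure sieve (`rough_count`) does this
with density `sieveDensity T r / (N (N + 1))`. Hence `log Q(n)` is `n` times a constant that depends
only on `T`, `D`, `r`, up to the explicit error of `log_Q_approx`.

With `X = √((1/6 - ε) log n log log n)`, take `T ≈ e^X`, `D ≈ n^{1/3}` and `T^r ≈ n^{1/3}`. The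
discarded smooth parts and the sieve tail are both handled by Rankin's trick with the weight
`z = (log n)^{1/2 - ε}`, together with `∑_{p < T} 1/p = O(log log T)`, and both are at most
`exp(-(1 + 4ε + o(1)) X)` relative to `n`. The approximation for parameters chosen from `n` is valid
for all `n' ≥ n` (`log_Q_uniform`), so `log Q(n) / n` is Cauchy, and comparing its limit with the
approximation at `n` itself bounds the error.
-/

/-- A finite set of positive integers is primitive if no element divides another. -/
def IsPrimitive (S : Finset ℕ) : Prop := ∀ a ∈ S, ∀ b ∈ S, a ∣ b → a = b

/-- `Q n` is the number of primitive subsets of `{1, 2, …, n}`. -/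
noncomputable def Q (n : ℕ) : ℕ :=
  Nat.card {S : Finset ℕ // S ⊆ Finset.Icc 1 n ∧ IsPrimitive S}

/-! ### Primitive sets and the locality of the increments -/

open Classical in
/-- The number of primitive subsets of a finite set `X`. -/
noncomputable def primCount (X : Finset ℕ) : ℕ := (X.powerset.filter IsPrimitive).card

lemma Q_eq_primCount (n : ℕ) : Q n = primCount (Finset.Icc 1 n) := by
  classical
  unfold Q primCount
  exact Nat.subtype_card _ (fun S => by simp)

lemma IsPrimitive.mono {S S' : Finset ℕ} (h : S ⊆ S') (hS : IsPrimitive S') : IsPrimitive S :=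
  fun a ha b hb hab => hS a (h ha) b (h hb) hab

lemma isPrimitive_empty : IsPrimitive ∅ := by intro a ha; simp at ha

lemma primCount_empty : primCount ∅ = 1 := by
  classical
  simp [primCount, Finset.filter_singleton, isPrimitive_empty]

lemma primCount_mono {X Y : Finset ℕ} (h : X ⊆ Y) : primCount X ≤ primCount Y := by
  classical
  apply Finset.card_le_card
  intro S
  simp only [Finset.mem_filter, Finset.mem_powerset]
  exact fun hS => ⟨hS.1.trans h, hS.2⟩

lemma primCount_pos (X : Finset ℕ) : 0 < primCount X := by
  have := primCount_mono (Finset.empty_subset X)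
  rw [primCount_empty] at this
  exact this

/-- Primitive sets can be counted separately on two parts with no divisibility across them. -/
lemma primCount_union {A B : Finset ℕ} (hAB : Disjoint A B)
    (h : ∀ a ∈ A, ∀ b ∈ B, ¬ a ∣ b ∧ ¬ b ∣ a) :
    primCount (A ∪ B) = primCount A * primCount B := by
  classical
  unfold primCount
  rw [← Finset.card_product]
  symm
  refine Finset.card_bij' (fun p _ => p.1 ∪ p.2) (fun S _ => (S ∩ A, S ∩ B)) ?_ ?_ ?_ ?_
  · rintro ⟨S, R⟩ hp
    simp only [Finset.mem_product, Finset.mem_filter, Finset.mem_powerset] at hp ⊢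
    obtain ⟨⟨hS, hS'⟩, hR, hR'⟩ := hp
    refine ⟨Finset.union_subset_union hS hR, ?_⟩
    intro a ha b hb hab
    rcases Finset.mem_union.1 ha with ha | ha <;> rcases Finset.mem_union.1 hb with hb | hb
    · exact hS' a ha b hb hab
    · exact absurd hab (h a (hS ha) b (hR hb)).1
    · exact absurd hab (h b (hS hb) a (hR ha)).2
    · exact hR' a ha b hb hab
  · intro S hS
    simp only [Finset.mem_product, Finset.mem_filter, Finset.mem_powerset] at hS ⊢
    exact ⟨⟨Finset.inter_subset_right, hS.2.mono Finset.inter_subset_left⟩,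
      Finset.inter_subset_right, hS.2.mono Finset.inter_subset_left⟩
  · rintro ⟨S, R⟩ hp
    simp only [Finset.mem_product, Finset.mem_filter, Finset.mem_powerset] at hp
    obtain ⟨⟨hS, -⟩, hR, -⟩ := hp
    have h1 : R ∩ A = ∅ := Finset.disjoint_iff_inter_eq_empty.1 (hAB.symm.mono_left hR)
    have h2 : S ∩ B = ∅ := Finset.disjoint_iff_inter_eq_empty.1 (hAB.mono_left hS)
    simp only [Prod.mk.injEq, Finset.union_inter_distrib_right, h1, h2, Finset.union_empty,
      Finset.empty_union]
    exact ⟨Finset.inter_eq_left.2 hS, Finset.inter_eq_left.2 hR⟩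
  · intro S hS
    simp only [Finset.mem_filter, Finset.mem_powerset] at hS
    rw [← Finset.inter_union_distrib_left]
    exact Finset.inter_eq_left.2 hS.1

/-- Dilating a set does not change its divisibility relations. -/
lemma primCount_image_mul {m : ℕ} (hm : 0 < m) (X : Finset ℕ) :
    primCount (X.image (m * ·)) = primCount X := by
  classical
  have hinj : Function.Injective (m * · : ℕ → ℕ) := fun a b hab => Nat.eq_of_mul_eq_mul_left hm hab
  unfold primCount
  symm
  refine Finset.card_bij (fun S _ => S.image (m * ·)) ?_ ?_ ?_
  · intro S hS
    simp only [Finset.mem_filter, Finset.mem_powerset] at hS ⊢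
    refine ⟨Finset.image_subset_image hS.1, ?_⟩
    intro a ha b hb hab
    obtain ⟨a, ha', rfl⟩ := Finset.mem_image.1 ha
    obtain ⟨b, hb', rfl⟩ := Finset.mem_image.1 hb
    replace hab : m * a ∣ m * b := hab
    rw [hS.2 a ha' b hb' ((Nat.mul_dvd_mul_iff_left hm).1 hab)]
  · intro S _ S' _ h
    exact Finset.image_injective hinj h
  · intro S hS
    simp only [Finset.mem_filter, Finset.mem_powerset] at hS
    obtain ⟨R, hR, rfl⟩ := Finset.subset_image_iff.1 hS.1
    refine ⟨R, ?_, rfl⟩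
    simp only [Finset.mem_filter, Finset.mem_powerset]
    refine ⟨by exact_mod_cast hR, ?_⟩
    intro a ha b hb hab
    exact hinj (hS.2 _ (Finset.mem_image_of_mem _ ha) _ (Finset.mem_image_of_mem _ hb)
      (Nat.mul_dvd_mul_left m hab))

lemma primCount_insert_le (k : ℕ) (X : Finset ℕ) : primCount (insert k X) ≤ 2 * primCount X := by
  classical
  unfold primCount
  have hsub : ((insert k X).powerset.filter IsPrimitive) ⊆
      (X.powerset.filter IsPrimitive) ∪ (X.powerset.filter IsPrimitive).image (insert k) := by
    intro S hS
    simp only [Finset.mem_filter, Finset.mem_powerset, Finset.mem_union, Finset.mem_image] at hS ⊢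
    by_cases hk : k ∈ S
    · right
      refine ⟨S.erase k, ⟨?_, hS.2.mono (Finset.erase_subset _ _)⟩, Finset.insert_erase hk⟩
      rw [← Finset.subset_insert_iff]
      exact hS.1
    · left
      exact ⟨(Finset.subset_insert_iff_of_notMem hk).1 hS.1, hS.2⟩
  calc _ ≤ _ := Finset.card_le_card hsub
    _ ≤ _ := Finset.card_union_le _ _
    _ ≤ (X.powerset.filter IsPrimitive).card + (X.powerset.filter IsPrimitive).card :=
        Nat.add_le_add_left Finset.card_image_le _
    _ = _ := by ring

/-- The logarithmic increment in the number of primitive sets when the least element `k` is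
added to `{k + 1, …, n}`. -/
noncomputable def logStep (k n : ℕ) : ℝ :=
  Real.log (primCount (Finset.Icc k n)) - Real.log (primCount (Finset.Icc (k + 1) n))

lemma logStep_nonneg (k n : ℕ) : 0 ≤ logStep k n := by
  unfold logStep
  rw [sub_nonneg]
  apply Real.log_le_log
  · exact_mod_cast primCount_pos _
  · exact_mod_cast primCount_mono (Finset.Icc_subset_Icc_left (Nat.le_succ k))

lemma logStep_le_one (k n : ℕ) : logStep k n ≤ 1 := by
  unfold logStep
  have h0 : (0 : ℝ) < primCount (Finset.Icc (k + 1) n) := by exact_mod_cast primCount_pos _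
  have hle : primCount (Finset.Icc k n) ≤ 2 * primCount (Finset.Icc (k + 1) n) := by
    refine (primCount_mono ?_).trans (primCount_insert_le k _)
    intro x hx
    simp only [Finset.mem_Icc, Finset.mem_insert] at hx ⊢
    omega
  have h1 : Real.log (primCount (Finset.Icc k n)) ≤
      Real.log (2 * primCount (Finset.Icc (k + 1) n)) := by
    apply Real.log_le_log
    · exact_mod_cast primCount_pos _
    · exact_mod_cast hle
  rw [Real.log_mul (by norm_num) h0.ne'] at h1
  have := Real.log_two_lt_d9
  linarith

lemma log_Q_eq_sum (n : ℕ) : Real.log (Q n) = ∑ k ∈ Finset.Icc 1 n, logStep k n := by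
  have h : ∀ j, j ≤ n → ∑ k ∈ Finset.Icc (n + 1 - j) n, logStep k n =
      Real.log (primCount (Finset.Icc (n + 1 - j) n)) := by
    intro j
    induction j with
    | zero => intro _; simp [primCount_empty]
    | succ j ih =>
      intro hj
      have h1 : n + 1 - j = (n + 1 - (j + 1)) + 1 := by omega
      have h2 := Finset.insert_Icc_add_one_left_eq_Icc (a := n + 1 - (j + 1)) (b := n) (by omega)
      conv_lhs => rw [← h2]
      rw [Finset.sum_insert (by simp), ← h1, ih (by omega), logStep, ← h1]
      ring
  rw [Q_eq_primCount]
  have := h n le_rfl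
  simpa using this.symm

/-- Locality of the increment: if `m` is coprime to every positive integer below `T` and
`n < d m T`, then the multiples of `m` in `[d m, n]` are separated from all other elements in
the divisor graph, and they form a dilated copy of `[d, n / m]`. -/
lemma logStep_mul {T d m n : ℕ} (hm : 0 < m) (hT : n < d * m * T)
    (hco : ∀ s, 0 < s → s < T → s.Coprime m) :
    logStep (d * m) n = logStep d (n / m) := by
  classical
  -- splitting off the multiples of `m` from an interval that starts at `d m` or just above it
  have key : ∀ a e, d * m ≤ a → (∀ x, a ≤ m * x ↔ e ≤ x) →
      Real.log (primCount (Finset.Icc a n)) = Real.log (primCount (Finset.Icc e (n / m))) +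
        Real.log (primCount ((Finset.Icc (d * m) n).filter (fun x => ¬ m ∣ x ∧ a ≤ x))) := by
    intro a e hda hae
    have hsplit : Finset.Icc a n = (Finset.Icc e (n / m)).image (m * ·) ∪
        (Finset.Icc (d * m) n).filter (fun x => ¬ m ∣ x ∧ a ≤ x) := by
      ext x
      simp only [Finset.mem_Icc, Finset.mem_union, Finset.mem_image, Finset.mem_filter]
      constructor
      · intro hx
        by_cases hmx : m ∣ x
        · left
          obtain ⟨y, rfl⟩ := hmx
          exact ⟨y, ⟨(hae y).1 hx.1, (Nat.le_div_iff_mul_le hm).2 (by rw [mul_comm]; exact hx.2)⟩,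
            rfl⟩
        · right
          exact ⟨⟨by omega, hx.2⟩, hmx, hx.1⟩
      · rintro (⟨y, hy, rfl⟩ | hx)
        · refine ⟨(hae y).2 hy.1, ?_⟩
          have := (Nat.le_div_iff_mul_le hm).1 hy.2
          rw [mul_comm]; exact this
        · exact ⟨hx.2.2, hx.1.2⟩
    have hquot : ∀ x y, d * m ≤ x → y ≤ n → 0 < y → x ∣ y → ∃ s, 0 < s ∧ s < T ∧ y = x * s := by
      rintro x y hx hy hy0 ⟨s, rfl⟩
      refine ⟨s, Nat.pos_of_ne_zero (by rintro rfl; simp at hy0), ?_, rfl⟩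
      by_contra! hs
      have := Nat.mul_le_mul hx hs
      omega
    have hdm : 0 < d * m := by
      rcases Nat.eq_zero_or_pos (d * m) with h | h
      · rw [h] at hT; simp at hT
      · exact h
    rw [hsplit, primCount_union, primCount_image_mul hm, Nat.cast_mul, Real.log_mul]
    · exact_mod_cast (primCount_pos _).ne'
    · exact_mod_cast (primCount_pos _).ne'
    · rw [Finset.disjoint_left]
      intro x hx hx'
      obtain ⟨y, -, rfl⟩ := Finset.mem_image.1 hx
      exact (Finset.mem_filter.1 hx').2.1 (dvd_mul_right _ _)
    · intro x hx y hy
      obtain ⟨z, hz, rfl⟩ := Finset.mem_image.1 hx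
      have hx1 : a ≤ m * z := (hae z).2 (Finset.mem_Icc.1 hz).1
      have hx2 : m * z ≤ n := by
        have := (Nat.le_div_iff_mul_le hm).1 (Finset.mem_Icc.1 hz).2
        rw [mul_comm]; exact this
      simp only [Finset.mem_filter, Finset.mem_Icc] at hy
      constructor
      · intro h
        exact hy.2.1 ((dvd_mul_right _ _).trans h)
      · intro h
        obtain ⟨s, hs0, hsT, hs⟩ := hquot y (m * z) hy.1.1 hx2 (by omega) h
        have : m ∣ y * s := hs ▸ dvd_mul_right _ _
        exact hy.2.1 (((hco s hs0 hsT).symm).dvd_of_dvd_mul_right this)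
  have h1 := key (d * m) d le_rfl (fun x => by
    rw [mul_comm d m]; exact ⟨fun h => Nat.le_of_mul_le_mul_left h hm, Nat.mul_le_mul_left m⟩)
  have h2 := key (d * m + 1) (d + 1) (Nat.le_succ _) (fun x => by
    rw [mul_comm d m, Nat.succ_le_iff, Nat.succ_le_iff]
    exact ⟨fun h => Nat.lt_of_mul_lt_mul_left h, fun h => Nat.mul_lt_mul_of_pos_left h hm⟩)
  have h3 : (Finset.Icc (d * m) n).filter (fun x => ¬ m ∣ x ∧ d * m ≤ x) =
      (Finset.Icc (d * m) n).filter (fun x => ¬ m ∣ x ∧ d * m + 1 ≤ x) := by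
    apply Finset.filter_congr
    intro x hx
    constructor
    · rintro ⟨h, h'⟩
      refine ⟨h, ?_⟩
      rcases Nat.lt_or_ge (d * m) x with h'' | h''
      · exact h''
      · exact absurd ((le_antisymm h' h'') ▸ dvd_mul_left m d) h
    · rintro ⟨h, h'⟩
      exact ⟨h, by omega⟩
  unfold logStep
  rw [h1, h2, h3]
  ring

/-- All subsets of the upper half of `{1, …, n}` are primitive. -/
lemma log_Q_ge (n : ℕ) : ((n : ℝ) / 2) * Real.log 2 ≤ Real.log (Q n) := by
  classical
  have h : 2 ^ (n - n / 2) ≤ Q n := by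
    rw [Q_eq_primCount, primCount]
    have hcard : (Finset.Ioc (n / 2) n).powerset.card = 2 ^ (n - n / 2) := by
      rw [Finset.card_powerset, Nat.card_Ioc]
    rw [← hcard]
    apply Finset.card_le_card
    intro S hS
    simp only [Finset.mem_powerset, Finset.mem_filter] at hS ⊢
    refine ⟨fun x hx => ?_, ?_⟩
    · have := Finset.mem_Ioc.1 (hS hx)
      exact Finset.mem_Icc.2 ⟨by omega, this.2⟩
    · intro a ha b hb hab
      have h1 := Finset.mem_Ioc.1 (hS ha)
      have h2 := Finset.mem_Ioc.1 (hS hb)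
      obtain ⟨c, rfl⟩ := hab
      rcases c with _ | _ | c
      · omega
      · simp
      · have : a * 2 ≤ a * (c + 1 + 1) := Nat.mul_le_mul_left a (by omega)
        omega
  have h' : Real.log ((2 : ℝ) ^ (n - n / 2)) ≤ Real.log (Q n) := by
    apply Real.log_le_log (by positivity)
    exact_mod_cast h
  rw [Real.log_pow] at h'
  refine le_trans ?_ h'
  apply mul_le_mul_of_nonneg_right _ (Real.log_nonneg (by norm_num))
  have : n ≤ 2 * (n - n / 2) := by omega
  have : (n : ℝ) ≤ 2 * ((n - n / 2 : ℕ) : ℝ) := by exact_mod_cast this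
  linarith

/-! ### Brun's pure sieve -/

/-- The Bonferroni inequality: truncating `∑_{A ⊆ X} (-1)^|A| = [X = ∅]` at `|A| ≤ r` costs at
most the number of subsets of size `r + 1`. -/
lemma bonferroni {ι : Type*} [DecidableEq ι] (X : Finset ι) (r : ℕ) :
    |(if X = ∅ then (1 : ℝ) else 0) - ∑ A ∈ X.powerset.filter (fun A => A.card ≤ r),
      (-1 : ℝ) ^ A.card| ≤ ((X.powersetCard (r + 1)).card : ℝ) := by
  have h1 : ∑ A ∈ X.powerset.filter (fun A => A.card ≤ r), (-1 : ℝ) ^ A.card =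
      ∑ j ∈ Finset.range (r + 1), (-1 : ℝ) ^ j * (X.card.choose j : ℝ) := by
    rw [← Finset.sum_fiberwise_of_maps_to (g := Finset.card) (t := Finset.range (r + 1))]
    · apply Finset.sum_congr rfl
      intro j hj
      have hj := Finset.mem_range.1 hj
      have : (X.powerset.filter (fun A => A.card ≤ r)).filter (fun A => A.card = j) =
          X.powersetCard j := by
        ext A
        simp only [Finset.mem_filter, Finset.mem_powerset, Finset.mem_powersetCard]
        constructor
        · exact fun h => ⟨h.1.1, h.2⟩
        · exact fun h => ⟨⟨h.1, by omega⟩, h.2⟩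
      rw [this, Finset.sum_congr rfl (g := fun _ => (-1 : ℝ) ^ j)]
      · rw [Finset.sum_const, Finset.card_powersetCard, nsmul_eq_mul, mul_comm]
      · intro A hA
        rw [(Finset.mem_powersetCard.1 hA).2]
    · intro A hA
      have := (Finset.mem_filter.1 hA).2
      exact Finset.mem_range.2 (by omega)
  rw [h1, Finset.card_powersetCard]
  rcases X.eq_empty_or_nonempty with rfl | hX
  · have : ∑ j ∈ Finset.range (r + 1), (-1 : ℝ) ^ j * ((0 : ℕ).choose j : ℝ) = 1 := by
      rw [Finset.sum_range_succ']
      simp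
    simp [this]
  · obtain ⟨c, hc⟩ : ∃ c, X.card = c + 1 := ⟨X.card - 1, by have := hX.card_pos; omega⟩
    have h2 := Int.alternating_sum_range_choose_eq_choose (n := c) (m := r)
    have h3 : ∑ j ∈ Finset.range (r + 1), (-1 : ℝ) ^ j * ((c + 1).choose j : ℝ) =
        (-1 : ℝ) ^ r * (c.choose r : ℝ) := by exact_mod_cast h2
    rw [if_neg hX.ne_empty, hc, h3, zero_sub, abs_neg, abs_mul, abs_pow, abs_neg, abs_one, one_pow,
      one_mul, Nat.abs_cast]
    rw [Nat.choose_succ_succ]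
    push_cast
    have : (0 : ℝ) ≤ (c.choose (r + 1) : ℝ) := by positivity
    linarith

/-- A number is `T`-rough if no prime below `T` divides it. -/
def IsRough (T m : ℕ) : Prop := ∀ p ∈ Nat.primesBelow T, ¬ p ∣ m

lemma prod_dvd_iff_subset {T m : ℕ} {A : Finset ℕ} (hA : A ⊆ Nat.primesBelow T) :
    ∏ p ∈ A, p ∣ m ↔ A ⊆ (Nat.primesBelow T).filter (· ∣ m) := by
  constructor
  · intro h p hp
    exact Finset.mem_filter.2 ⟨hA hp, (Finset.dvd_prod_of_mem _ hp).trans h⟩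
  · intro h
    apply Finset.prod_primes_dvd
    · intro p hp
      exact (Nat.prime_of_mem_primesBelow (hA hp)).prime
    · intro p hp
      exact (Finset.mem_filter.1 (h hp)).2

/-- The truncated Legendre sum approximating the density of `T`-rough numbers. -/
noncomputable def sieveDensity (T r : ℕ) : ℝ :=
  ∑ A ∈ (Nat.primesBelow T).powerset.filter (fun A => A.card ≤ r),
    (-1 : ℝ) ^ A.card * (1 / ((∏ p ∈ A, p : ℕ) : ℝ))

/-- The sum of `1 / e` over products `e` of `r + 1` distinct primes below `T`. -/
noncomputable def sieveTail (T r : ℕ) : ℝ :=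
  ∑ A ∈ (Nat.primesBelow T).powersetCard (r + 1), 1 / ((∏ p ∈ A, p : ℕ) : ℝ)

lemma sieveTail_nonneg (T r : ℕ) : 0 ≤ sieveTail T r :=
  Finset.sum_nonneg fun _ _ => by positivity

lemma card_small_subsets_le (T r : ℕ) (hT : 1 ≤ T) :
    ((Nat.primesBelow T).powerset.filter (fun A => A.card ≤ r)).card ≤ T ^ r := by
  have h : ((Nat.primesBelow T).powerset.filter (fun A => A.card ≤ r)).card ≤
      (Finset.Icc 1 (T ^ r)).card := by
    apply Finset.card_le_card_of_injOn (fun A => ∏ p ∈ A, p)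
    · intro A hA
      simp only [Finset.coe_filter, Finset.mem_powerset, Set.mem_ofPred_eq] at hA
      simp only [Finset.coe_Icc, Set.mem_Icc]
      refine ⟨Finset.one_le_prod' (fun p hp =>
        (Nat.prime_of_mem_primesBelow (hA.1 hp)).one_lt.le), ?_⟩
      calc ∏ p ∈ A, p ≤ T ^ A.card :=
            Finset.prod_le_pow_card _ _ _ (fun p hp => (Nat.lt_of_mem_primesBelow (hA.1 hp)).le)
        _ ≤ T ^ r := Nat.pow_le_pow_right hT hA.2
    · intro A hA B hB hAB
      simp only [Finset.coe_filter, Finset.mem_powerset, Set.mem_ofPred_eq] at hA hB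
      have hA' := Nat.primeFactors_prod (fun p hp => Nat.prime_of_mem_primesBelow (hA.1 hp))
      have hB' := Nat.primeFactors_prod (fun p hp => Nat.prime_of_mem_primesBelow (hB.1 hp))
      rw [← hA', ← hB']
      exact congrArg Nat.primeFactors hAB
  simpa using h

lemma card_multiples_approx (n N e : ℕ) (hN : 0 < N) (he : 0 < e) :
    |((((Finset.Ioc (n / (N + 1)) (n / N)).filter (e ∣ ·)).card : ℕ) : ℝ) -
      (n : ℝ) / (N * (N + 1)) * (1 / (e : ℝ))| ≤ 1 := by
  have hle : n / (N + 1) ≤ n / N := Nat.div_le_div_left (Nat.le_succ N) hN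
  have h1 : ((Finset.Ioc (n / (N + 1)) (n / N)).filter (e ∣ ·)).card + n / ((N + 1) * e) =
      n / (N * e) := by
    rw [← Nat.div_div_eq_div_mul, ← Nat.div_div_eq_div_mul, ← Nat.Ioc_filter_dvd_card_eq_div (n / N),
      ← Nat.Ioc_filter_dvd_card_eq_div (n / (N + 1)), ← Finset.card_union_of_disjoint]
    · rw [← Finset.filter_union, Finset.union_comm,
        Finset.Ioc_union_Ioc_eq_Ioc (Nat.zero_le _) hle]
    · rw [Finset.disjoint_left]
      intro x hx hx'
      simp only [Finset.mem_filter, Finset.mem_Ioc] at hx hx'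
      omega
  have h2 : (((((Finset.Ioc (n / (N + 1)) (n / N)).filter (e ∣ ·)).card : ℕ) : ℝ)) =
      ((n / (N * e) : ℕ) : ℝ) - ((n / ((N + 1) * e) : ℕ) : ℝ) := by
    rw [← h1]; push_cast; ring
  have hf : ∀ a : ℕ, 0 < a → ((n / a : ℕ) : ℝ) ≤ (n : ℝ) / a ∧ (n : ℝ) / a ≤ ((n / a : ℕ) : ℝ) + 1 := by
    intro a ha
    refine ⟨Nat.cast_div_le, ?_⟩
    rw [div_le_iff₀ (by exact_mod_cast ha)]
    have := (Nat.lt_mul_div_succ n ha).le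
    have h : (n : ℝ) ≤ (a : ℝ) * (((n / a : ℕ) : ℝ) + 1) := by exact_mod_cast this
    linarith
  have ha := hf (N * e) (by positivity)
  have hb := hf ((N + 1) * e) (by positivity)
  have h3 : (n : ℝ) / (N * (N + 1)) * (1 / (e : ℝ)) =
      (n : ℝ) / ((N * e : ℕ) : ℝ) - (n : ℝ) / (((N + 1) * e : ℕ) : ℝ) := by
    have : (N : ℝ) ≠ 0 := by positivity
    have : (e : ℝ) ≠ 0 := by positivity
    have : (N : ℝ) + 1 ≠ 0 := by positivity
    push_cast
    field_simp
    ring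
  rw [h2, h3, abs_le]
  constructor <;> linarith [ha.1, ha.2, hb.1, hb.2]

open Classical in
/-- Brun's pure sieve for the `T`-rough `m` with `⌊n / m⌋ = N`. -/
lemma rough_count (T r n N : ℕ) (hT : 1 ≤ T) (hN : 0 < N) :
    |((((Finset.Ioc (n / (N + 1)) (n / N)).filter (IsRough T)).card : ℕ) : ℝ) -
      (n : ℝ) / (N * (N + 1)) * sieveDensity T r| ≤
      (T : ℝ) ^ (r + 1) + (n : ℝ) / (N * (N + 1)) * sieveTail T r := by
  set M := Finset.Ioc (n / (N + 1)) (n / N) with hM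
  set P := Nat.primesBelow T with hP
  set y : ℝ := (n : ℝ) / (N * (N + 1)) with hy
  set c : Finset ℕ → ℝ := fun A => ((M.filter (fun m => ∏ p ∈ A, p ∣ m)).card : ℝ) with hc
  have hcapp : ∀ A, A ⊆ P → |c A - y * (1 / ((∏ p ∈ A, p : ℕ) : ℝ))| ≤ 1 := fun A hA =>
    card_multiples_approx n N _ hN
      (Finset.prod_pos fun p hp => (Nat.prime_of_mem_primesBelow (hA hp)).pos)
  have hcsum : ∀ (F : Finset (Finset ℕ)) (g : Finset ℕ → ℝ), (∀ A ∈ F, A ⊆ P) →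
      ∑ A ∈ F, g A * c A = ∑ m ∈ M, ∑ A ∈ F.filter (fun A => A ⊆ P.filter (· ∣ m)), g A := by
    intro F g hF
    simp_rw [hc, Finset.card_filter, Nat.cast_sum, Finset.mul_sum, Finset.sum_filter]
    rw [Finset.sum_comm]
    refine Finset.sum_congr rfl fun m _ => Finset.sum_congr rfl fun A hA => ?_
    rw [if_congr (prod_dvd_iff_subset (hF A hA)) rfl rfl]
    split_ifs <;> simp
  -- the sieve identity, summed over the interval
  have h1 : |(((M.filter (IsRough T)).card : ℕ) : ℝ) -
      ∑ A ∈ P.powerset.filter (fun A => A.card ≤ r), (-1 : ℝ) ^ A.card * c A| ≤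
      ∑ A ∈ P.powersetCard (r + 1), 1 * c A := by
    rw [hcsum _ _ (fun A hA => Finset.mem_powerset.1 (Finset.mem_filter.1 hA).1),
      hcsum _ _ (fun A hA => (Finset.mem_powersetCard.1 hA).1), Finset.card_filter, Nat.cast_sum,
      ← Finset.sum_sub_distrib]
    refine (Finset.abs_sum_le_sum_abs _ _).trans (Finset.sum_le_sum fun m _ => ?_)
    have hb := bonferroni (P.filter (· ∣ m)) r
    have e1 : (P.powerset.filter (fun A => A.card ≤ r)).filter (fun A => A ⊆ P.filter (· ∣ m)) =
        (P.filter (· ∣ m)).powerset.filter (fun A => A.card ≤ r) := by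
      ext A
      simp only [Finset.mem_filter, Finset.mem_powerset]
      exact ⟨fun h => ⟨h.2, h.1.2⟩, fun h => ⟨⟨h.1.trans (Finset.filter_subset _ _), h.2⟩, h.1⟩⟩
    have e2 : (P.powersetCard (r + 1)).filter (fun A => A ⊆ P.filter (· ∣ m)) =
        (P.filter (· ∣ m)).powersetCard (r + 1) := by
      ext A
      simp only [Finset.mem_filter, Finset.mem_powersetCard]
      exact ⟨fun h => ⟨h.2, h.1.2⟩, fun h => ⟨⟨h.1.trans (Finset.filter_subset _ _), h.2⟩, h.1⟩⟩
    have e3 : IsRough T m ↔ P.filter (· ∣ m) = ∅ := by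
      rw [Finset.filter_eq_empty_iff]; rfl
    rw [e1, e2]
    simp only [Finset.sum_const, nsmul_eq_mul, mul_one, Nat.cast_ite, Nat.cast_one, Nat.cast_zero]
    rw [if_congr e3 rfl rfl]
    exact hb
  have h2 : |∑ A ∈ P.powerset.filter (fun A => A.card ≤ r), (-1 : ℝ) ^ A.card * c A -
      y * sieveDensity T r| ≤ ((P.powerset.filter (fun A => A.card ≤ r)).card : ℝ) := by
    rw [sieveDensity, Finset.mul_sum, ← Finset.sum_sub_distrib, Finset.cast_card]
    refine (Finset.abs_sum_le_sum_abs _ _).trans (Finset.sum_le_sum fun A hA => ?_)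
    have := hcapp A (Finset.mem_powerset.1 (Finset.mem_filter.1 hA).1)
    have e : (-1 : ℝ) ^ A.card * c A - y * ((-1 : ℝ) ^ A.card * (1 / ((∏ p ∈ A, p : ℕ) : ℝ))) =
        (-1 : ℝ) ^ A.card * (c A - y * (1 / ((∏ p ∈ A, p : ℕ) : ℝ))) := by ring
    rw [e, abs_mul, abs_pow, abs_neg, abs_one, one_pow, one_mul]
    exact this
  have h3 : ∑ A ∈ P.powersetCard (r + 1), 1 * c A ≤
      ((P.powersetCard (r + 1)).card : ℝ) + y * sieveTail T r := by
    rw [sieveTail, Finset.mul_sum, Finset.cast_card, ← Finset.sum_add_distrib]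
    refine Finset.sum_le_sum fun A hA => ?_
    have := (abs_le.1 (hcapp A (Finset.mem_powersetCard.1 hA).1)).2
    linarith
  have h4 : ((P.powerset.filter (fun A => A.card ≤ r)).card : ℝ) +
      ((P.powersetCard (r + 1)).card : ℝ) ≤ (T : ℝ) ^ (r + 1) := by
    have : (P.powerset.filter (fun A => A.card ≤ r)).card + (P.powersetCard (r + 1)).card ≤
        T ^ (r + 1) := by
      rw [← Finset.card_union_of_disjoint]
      · refine (Finset.card_le_card ?_).trans (card_small_subsets_le T (r + 1) hT)
        intro A hA
        rcases Finset.mem_union.1 hA with hA | hA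
        · have := Finset.mem_filter.1 hA
          exact Finset.mem_filter.2 ⟨this.1, by omega⟩
        · have := Finset.mem_powersetCard.1 hA
          exact Finset.mem_filter.2 ⟨Finset.mem_powerset.2 this.1, by omega⟩
      · rw [Finset.disjoint_left]
        intro A hA hA'
        have h1 := (Finset.mem_filter.1 hA).2
        have h2 := (Finset.mem_powersetCard.1 hA').2
        omega
    exact_mod_cast this
  rw [abs_le] at h1 h2 ⊢
  constructor <;> linarith [h1.1, h1.2, h2.1, h2.2]

/-- Rankin's trick for elementary symmetric functions: the tail is at most
`z^{-(r+1)} ∏ (1 + z / p)`. -/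
lemma sieveTail_le (T r : ℕ) (z : ℝ) (hz : 0 < z) :
    sieveTail T r ≤ Real.exp (z * ∑ p ∈ Nat.primesBelow T, 1 / (p : ℝ)) / z ^ (r + 1) := by
  rw [le_div_iff₀ (by positivity)]
  calc sieveTail T r * z ^ (r + 1)
      = ∑ A ∈ (Nat.primesBelow T).powersetCard (r + 1), ∏ p ∈ A, (z * (1 / (p : ℝ))) := by
        rw [sieveTail, Finset.sum_mul]
        refine Finset.sum_congr rfl fun A hA => ?_
        rw [Finset.prod_mul_distrib, Finset.prod_const, (Finset.mem_powersetCard.1 hA).2,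
          Finset.prod_div_distrib]
        push_cast
        simp [mul_comm]
    _ ≤ ∑ A ∈ (Nat.primesBelow T).powerset, ∏ p ∈ A, (z * (1 / (p : ℝ))) := by
        apply Finset.sum_le_sum_of_subset_of_nonneg
        · intro A hA
          exact Finset.mem_powerset.2 (Finset.mem_powersetCard.1 hA).1
        · intro A _ _
          exact Finset.prod_nonneg fun p _ => by positivity
    _ = ∏ p ∈ Nat.primesBelow T, (1 + z * (1 / (p : ℝ))) := (Finset.prod_one_add _).symm
    _ ≤ ∏ p ∈ Nat.primesBelow T, Real.exp (z * (1 / (p : ℝ))) := by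
        apply Finset.prod_le_prod
        · intro p _; positivity
        · intro p _
          rw [add_comm]; exact Real.add_one_le_exp _
    _ = _ := by rw [← Real.exp_sum, Finset.mul_sum]

/-! ### Smooth and rough parts -/

lemma exists_smooth_mul_rough (T k : ℕ) (hk : k ≠ 0) :
    ∃ d m, d ∈ T.smoothNumbers ∧ IsRough T m ∧ k = d * m := by
  induction k using induction_on_primes with
  | zero => exact absurd rfl hk
  | one =>
    refine ⟨1, 1, ?_, ?_, rfl⟩
    · rw [Nat.mem_smoothNumbers']
      intro p hp h
      exact absurd (Nat.dvd_one.1 h) hp.one_lt.ne'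
    · intro p hp h
      exact absurd (Nat.dvd_one.1 h) (Nat.prime_of_mem_primesBelow hp).one_lt.ne'
  | prime_mul p a hp ih =>
    obtain ⟨d, m, hd, hm, rfl⟩ := ih (by rintro rfl; simp at hk)
    by_cases hpT : p < T
    · refine ⟨p * d, m, ?_, hm, by ring⟩
      exact Nat.mul_mem_smoothNumbers (Nat.mem_smoothNumbers_of_lt hp.pos hpT) hd
    · refine ⟨d, p * m, hd, ?_, by ring⟩
      intro q hq hqm
      have hq' := Nat.prime_of_mem_primesBelow hq
      rcases hq'.dvd_mul.1 hqm with h | h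
      · have := (Nat.prime_dvd_prime_iff_eq hq' hp).1 h
        have := Nat.lt_of_mem_primesBelow hq
        omega
      · exact hm q hq h

lemma smooth_coprime_rough {T d m : ℕ} (hd : d ∈ T.smoothNumbers) (hm : IsRough T m) :
    d.Coprime m := by
  apply Nat.coprime_of_dvd
  intro p hp hpd hpm
  exact hm p (Nat.mem_primesBelow.2 ⟨Nat.mem_smoothNumbers'.1 hd p hp hpd, hp⟩) hpm

lemma smooth_mul_rough_inj {T d m d' m' : ℕ} (hd : d ∈ T.smoothNumbers) (hm : IsRough T m)
    (hd' : d' ∈ T.smoothNumbers) (hm' : IsRough T m') (h : d * m = d' * m') :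
    d = d' ∧ m = m' := by
  have h1 : d ∣ d' := (smooth_coprime_rough hd hm').dvd_of_dvd_mul_right (h ▸ dvd_mul_right d m)
  have h2 : d' ∣ d := (smooth_coprime_rough hd' hm).dvd_of_dvd_mul_right (h ▸ dvd_mul_right d' m')
  have h3 := Nat.dvd_antisymm h1 h2
  subst h3
  exact ⟨rfl, Nat.eq_of_mul_eq_mul_left (Nat.pos_of_ne_zero (Nat.ne_zero_of_mem_smoothNumbers hd)) h⟩

open Classical in
/-- The `T`-smooth numbers in `[a, b]`. -/
noncomputable def smoothIcc (T a b : ℕ) : Finset ℕ :=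
  (Finset.Icc a b).filter (· ∈ T.smoothNumbers)

lemma mem_smoothIcc {T a b d : ℕ} :
    d ∈ smoothIcc T a b ↔ (a ≤ d ∧ d ≤ b) ∧ d ∈ T.smoothNumbers := by
  simp [smoothIcc]

/-- The truncated series for the growth constant: `d` is the smooth part of the least element and
`N` the value of `⌊n / m⌋`, where `m` is the rough part. -/
noncomputable def mainConst (T D r : ℕ) : ℝ :=
  ∑ d ∈ smoothIcc T 1 D, ∑ N ∈ Finset.Ico d (d * T),
    logStep d N * (1 / ((N : ℝ) * (N + 1)) * sieveDensity T r)

lemma sum_telescope_le (d M : ℕ) (hd : 0 < d) :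
    ∑ N ∈ Finset.Ico d M, 1 / ((N : ℝ) * (N + 1)) ≤ 1 / (d : ℝ) := by
  rcases le_total M d with h | h
  · rw [Finset.Ico_eq_empty_of_le h]; simp
  · have : ∀ M, d ≤ M → ∑ N ∈ Finset.Ico d M, 1 / ((N : ℝ) * (N + 1)) = 1 / (d : ℝ) - 1 / M := by
      intro M hM
      induction M, hM using Nat.le_induction with
      | base => simp
      | succ M hM ih =>
        rw [Finset.sum_Ico_succ_top hM, ih]
        have : (M : ℝ) ≠ 0 := by
          have : 0 < M := by omega
          positivity
        have : (M : ℝ) + 1 ≠ 0 := by positivity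
        push_cast
        field_simp
        ring
    rw [this M h]
    have : (0 : ℝ) ≤ 1 / M := by positivity
    linarith

open Classical in
/-- The pairs (smooth part, rough part) of the integers `k ≤ n` for which the increment is
controlled: `n < k T` and the smooth part is at most `D`. -/
noncomputable def goodPairs (T D n : ℕ) : Finset (ℕ × ℕ) :=
  (smoothIcc T 1 D ×ˢ (Finset.Icc 1 n).filter (IsRough T)).filter
    (fun p => p.1 * p.2 ≤ n ∧ n < p.1 * p.2 * T)

lemma mem_goodPairs {T D n : ℕ} {p : ℕ × ℕ} : p ∈ goodPairs T D n ↔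
    (p.1 ∈ smoothIcc T 1 D ∧ (1 ≤ p.2 ∧ p.2 ≤ n) ∧ IsRough T p.2) ∧
      p.1 * p.2 ≤ n ∧ n < p.1 * p.2 * T := by
  simp [goodPairs]

/-- An integer `k ≤ n` not covered by a good pair satisfies `k ≤ n / T` or is divisible by a
`T`-smooth `d > D`; each contributes at most `1`. -/
lemma log_Q_sub_good (T D n : ℕ) (hT : 1 ≤ T) :
    |Real.log (Q n) - ∑ p ∈ goodPairs T D n, logStep (p.1 * p.2) n| ≤
      (n : ℝ) / T + n * ∑ d ∈ smoothIcc T (D + 1) n, 1 / (d : ℝ) := by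
  classical
  set G := goodPairs T D n with hG
  have himg : ∑ p ∈ G, logStep (p.1 * p.2) n =
      ∑ k ∈ G.image (fun p => p.1 * p.2), logStep k n := by
    rw [Finset.sum_image]
    intro p hp q hq hpq
    have hp := mem_goodPairs.1 hp
    have hq := mem_goodPairs.1 hq
    have := smooth_mul_rough_inj (mem_smoothIcc.1 hp.1.1).2 hp.1.2.2
      (mem_smoothIcc.1 hq.1.1).2 hq.1.2.2 hpq
    exact Prod.ext this.1 this.2
  have hsub : G.image (fun p => p.1 * p.2) ⊆ Finset.Icc 1 n := by
    intro k hk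
    obtain ⟨p, hp, rfl⟩ := Finset.mem_image.1 hk
    have hp := mem_goodPairs.1 hp
    exact Finset.mem_Icc.2 ⟨Nat.mul_pos (mem_smoothIcc.1 hp.1.1).1.1 hp.1.2.1.1, hp.2.1⟩
  rw [log_Q_eq_sum, himg, ← Finset.sum_sdiff hsub, add_sub_cancel_right,
    abs_of_nonneg (Finset.sum_nonneg fun k _ => logStep_nonneg k n)]
  have hcover : Finset.Icc 1 n \ G.image (fun p => p.1 * p.2) ⊆
      Finset.Ioc 0 (n / T) ∪
        (smoothIcc T (D + 1) n).biUnion (fun d => (Finset.Ioc 0 n).filter (d ∣ ·)) := by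
    intro k hk
    obtain ⟨hk, hk'⟩ := Finset.mem_sdiff.1 hk
    have hk := Finset.mem_Icc.1 hk
    obtain ⟨d, m, hd, hm, rfl⟩ := exists_smooth_mul_rough T k (by omega)
    rw [Finset.mem_union, Finset.mem_biUnion]
    by_contra! hcon
    have hd0 : 0 < d := Nat.pos_of_mul_pos_right hk.1
    have hm0 : 0 < m := Nat.pos_of_mul_pos_left hk.1
    have hdn : d ≤ n := (Nat.le_mul_of_pos_right d hm0).trans hk.2
    have hmn : m ≤ n := (Nat.le_mul_of_pos_left m hd0).trans hk.2
    apply hk'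
    refine Finset.mem_image.2 ⟨(d, m), mem_goodPairs.2 ⟨⟨mem_smoothIcc.2 ⟨⟨hd0, ?_⟩, hd⟩,
      ⟨hm0, hmn⟩, hm⟩, hk.2, ?_⟩, rfl⟩
    · by_contra! hD
      exact hcon.2 d (mem_smoothIcc.2 ⟨⟨hD, hdn⟩, hd⟩)
        (Finset.mem_filter.2 ⟨Finset.mem_Ioc.2 ⟨hk.1, hk.2⟩, dvd_mul_right _ _⟩)
    · by_contra! h
      exact hcon.1 (Finset.mem_Ioc.2 ⟨hk.1, (Nat.le_div_iff_mul_le hT).2 h⟩)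
  calc ∑ k ∈ Finset.Icc 1 n \ G.image (fun p => p.1 * p.2), logStep k n
      ≤ ∑ k ∈ Finset.Icc 1 n \ G.image (fun p => p.1 * p.2), (1 : ℝ) :=
        Finset.sum_le_sum fun k _ => logStep_le_one k n
    _ = ((Finset.Icc 1 n \ G.image (fun p => p.1 * p.2)).card : ℝ) := by simp
    _ ≤ ((n / T + ∑ d ∈ smoothIcc T (D + 1) n, n / d : ℕ) : ℝ) := by
        have : (Finset.Icc 1 n \ G.image (fun p => p.1 * p.2)).card ≤
            n / T + ∑ d ∈ smoothIcc T (D + 1) n, n / d := by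
          refine (Finset.card_le_card hcover).trans ((Finset.card_union_le _ _).trans ?_)
          refine Nat.add_le_add (by simp) (Finset.card_biUnion_le.trans ?_)
          refine Finset.sum_le_sum fun d _ => ?_
          rw [Nat.Ioc_filter_dvd_card_eq_div]
        exact_mod_cast this
    _ ≤ _ := by
        push_cast
        rw [Finset.mul_sum]
        refine add_le_add Nat.cast_div_le (Finset.sum_le_sum fun d _ => ?_)
        rw [mul_one_div]
        exact Nat.cast_div_le

open Classical in
/-- By locality, the increments over good pairs depend only on `d` and `⌊n / m⌋`. -/
lemma sum_good_eq (T D n : ℕ) :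
    ∑ p ∈ goodPairs T D n, logStep (p.1 * p.2) n =
      ∑ d ∈ smoothIcc T 1 D, ∑ N ∈ Finset.Ico d (d * T),
        logStep d N * (((Finset.Ioc (n / (N + 1)) (n / N)).filter (IsRough T)).card : ℝ) := by
  classical
  have h1 : ∀ p ∈ goodPairs T D n, logStep (p.1 * p.2) n = logStep p.1 (n / p.2) := by
    intro p hp
    have hp := mem_goodPairs.1 hp
    refine logStep_mul hp.1.2.1.1 hp.2.2 ?_
    intro s hs hsT
    exact smooth_coprime_rough (Nat.mem_smoothNumbers_of_lt hs hsT) hp.1.2.2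
  rw [Finset.sum_congr rfl h1, goodPairs, Finset.sum_filter, Finset.sum_product]
  refine Finset.sum_congr rfl fun d hd => ?_
  have hd0 : 1 ≤ d := (mem_smoothIcc.1 hd).1.1
  simp only
  rw [← Finset.sum_filter, ← Finset.sum_fiberwise_of_maps_to (g := fun m => n / m)
    (t := Finset.Ico d (d * T))]
  · refine Finset.sum_congr rfl fun N hN => ?_
    have hN := Finset.mem_Ico.1 hN
    have hset : ((((Finset.Icc 1 n).filter (IsRough T)).filter
        (fun m => d * m ≤ n ∧ n < d * m * T)).filter (fun m => n / m = N)) =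
        (Finset.Ioc (n / (N + 1)) (n / N)).filter (IsRough T) := by
      ext m
      simp only [Finset.mem_filter, Finset.mem_Icc, Finset.mem_Ioc]
      constructor
      · rintro ⟨⟨⟨⟨hm1, hmn⟩, hr⟩, h1, h2⟩, h3⟩
        refine ⟨⟨?_, ?_⟩, hr⟩
        · rw [Nat.div_lt_iff_lt_mul (by omega), mul_comm]
          have := (Nat.div_lt_iff_lt_mul (x := n) (y := N + 1) (k := m) hm1).1 (by omega)
          exact this
        · rw [Nat.le_div_iff_mul_le (by omega), mul_comm]
          exact (Nat.le_div_iff_mul_le hm1).1 h3.ge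
      · rintro ⟨⟨h1, h2⟩, hr⟩
        have hm1 : 0 < m := (Nat.zero_le _).trans_lt h1
        have h1' := (Nat.div_lt_iff_lt_mul (by omega)).1 h1
        have h2' := (Nat.le_div_iff_mul_le (by omega)).1 h2
        have h3 : n / m = N := by
          apply le_antisymm
          · rw [← Nat.lt_succ_iff, Nat.div_lt_iff_lt_mul hm1, mul_comm]
            exact h1'
          · rw [Nat.le_div_iff_mul_le hm1, mul_comm]; exact h2'
        have h4 : d * m ≤ n := (Nat.le_div_iff_mul_le hm1).1 (h3 ▸ hN.1)
        have h5 : n < d * T * m := (Nat.div_lt_iff_lt_mul hm1).1 (h3 ▸ hN.2)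
        refine ⟨⟨⟨⟨hm1, ?_⟩, hr⟩, h4, ?_⟩, h3⟩
        · exact (Nat.le_mul_of_pos_left m hd0).trans h4
        · calc n < d * T * m := h5
            _ = d * m * T := by ring
    rw [hset, Finset.sum_congr rfl (g := fun _ => logStep d N)]
    · rw [Finset.sum_const, nsmul_eq_mul, mul_comm]
    · intro m hm
      rw [← hset] at hm
      rw [(Finset.mem_filter.1 hm).2]
  · intro m hm
    simp only [Finset.mem_filter, Finset.mem_Icc] at hm
    obtain ⟨⟨⟨hm1, _⟩, _⟩, h1, h2⟩ := hm
    refine Finset.mem_Ico.2 ⟨(Nat.le_div_iff_mul_le hm1).2 h1, (Nat.div_lt_iff_lt_mul hm1).2 ?_⟩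
    calc n < d * m * T := h2
      _ = d * T * m := by ring

/-- The approximation of `log Q(n)` by a multiple of `n`, with an explicit error term in the
parameters `T` (smoothness level), `D` (largest smooth part kept), `r` (sieve truncation). -/
lemma log_Q_approx (T D r n : ℕ) (hT : 1 ≤ T) (hD : 1 ≤ D) :
    |Real.log (Q n) - n * mainConst T D r| ≤
      (n : ℝ) / T + n * (∑ d ∈ smoothIcc T (D + 1) n, 1 / (d : ℝ)) +
        (D : ℝ) ^ 2 * (T : ℝ) ^ (r + 2) + n * ((1 + Real.log D) * sieveTail T r) := by
  classical
  have h1 := log_Q_sub_good T D n hT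
  have htail := sieveTail_nonneg T r
  have h2 : |∑ p ∈ goodPairs T D n, logStep (p.1 * p.2) n - n * mainConst T D r| ≤
      (D : ℝ) ^ 2 * (T : ℝ) ^ (r + 2) + n * ((1 + Real.log D) * sieveTail T r) := by
    rw [sum_good_eq T D n, mainConst, Finset.mul_sum, ← Finset.sum_sub_distrib]
    have hd : ∀ d ∈ smoothIcc T 1 D,
        |∑ N ∈ Finset.Ico d (d * T),
          logStep d N * (((Finset.Ioc (n / (N + 1)) (n / N)).filter (IsRough T)).card : ℝ) -
          n * ∑ N ∈ Finset.Ico d (d * T),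
            logStep d N * (1 / ((N : ℝ) * (N + 1)) * sieveDensity T r)| ≤
        (D : ℝ) * (T : ℝ) ^ (r + 2) + n * sieveTail T r * (1 / (d : ℝ)) := by
      intro d hd
      have hd' := (mem_smoothIcc.1 hd).1
      rw [Finset.mul_sum, ← Finset.sum_sub_distrib]
      calc _ ≤ ∑ N ∈ Finset.Ico d (d * T), ((T : ℝ) ^ (r + 1) +
            n * sieveTail T r * (1 / ((N : ℝ) * (N + 1)))) := by
            refine (Finset.abs_sum_le_sum_abs _ _).trans (Finset.sum_le_sum fun N hN => ?_)
            have hN0 : 0 < N := by have := Finset.mem_Ico.1 hN; omega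
            have hr := rough_count T r n N hT hN0
            have e : logStep d N *
                (((Finset.Ioc (n / (N + 1)) (n / N)).filter (IsRough T)).card : ℝ) -
                n * (logStep d N * (1 / ((N : ℝ) * (N + 1)) * sieveDensity T r)) =
                logStep d N * ((((Finset.Ioc (n / (N + 1)) (n / N)).filter (IsRough T)).card : ℝ) -
                  (n : ℝ) / (N * (N + 1)) * sieveDensity T r) := by ring
            rw [e, abs_mul, abs_of_nonneg (logStep_nonneg d N)]
            have := mul_le_mul (logStep_le_one d N) hr (abs_nonneg _) zero_le_one
            refine this.trans (le_of_eq ?_)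
            ring
        _ = (((d * T - d : ℕ)) : ℝ) * (T : ℝ) ^ (r + 1) + n * sieveTail T r *
            ∑ N ∈ Finset.Ico d (d * T), 1 / ((N : ℝ) * (N + 1)) := by
            rw [Finset.sum_add_distrib, Finset.sum_const, Nat.card_Ico, nsmul_eq_mul,
              Finset.mul_sum]
        _ ≤ _ := by
            apply add_le_add
            · have : ((d * T - d : ℕ) : ℝ) ≤ (D : ℝ) * T := by
                have : d * T - d ≤ D * T := (Nat.sub_le _ _).trans (Nat.mul_le_mul_right T hd'.2)
                exact_mod_cast this
              calc _ ≤ (D : ℝ) * T * (T : ℝ) ^ (r + 1) := by gcongr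
                _ = _ := by ring
            · exact mul_le_mul_of_nonneg_left (sum_telescope_le d _ hd'.1) (by positivity)
    calc _ ≤ ∑ d ∈ smoothIcc T 1 D,
          ((D : ℝ) * (T : ℝ) ^ (r + 2) + n * sieveTail T r * (1 / (d : ℝ))) :=
          (Finset.abs_sum_le_sum_abs _ _).trans (Finset.sum_le_sum hd)
      _ ≤ ∑ d ∈ Finset.Icc 1 D,
          ((D : ℝ) * (T : ℝ) ^ (r + 2) + n * sieveTail T r * (1 / (d : ℝ))) := by
          apply Finset.sum_le_sum_of_subset_of_nonneg
          · exact Finset.filter_subset _ _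
          · intro d _ _; positivity
      _ = (D : ℝ) * ((D : ℝ) * (T : ℝ) ^ (r + 2)) +
          n * sieveTail T r * ∑ d ∈ Finset.Icc 1 D, 1 / (d : ℝ) := by
          rw [Finset.sum_add_distrib, Finset.sum_const, Nat.card_Icc, nsmul_eq_mul, Finset.mul_sum]
          simp
      _ ≤ _ := by
          have h : ∑ d ∈ Finset.Icc 1 D, 1 / (d : ℝ) ≤ 1 + Real.log D := by
            have := harmonic_le_one_add_log D
            rw [harmonic_eq_sum_Icc] at this
            push_cast at this
            simpa [one_div] using this
          have := mul_le_mul_of_nonneg_left h (show 0 ≤ (n : ℝ) * sieveTail T r by positivity)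
          nlinarith
  rw [abs_le] at h1 h2 ⊢
  constructor <;> linarith [h1.1, h1.2, h2.1, h2.2]

/-- Rankin's trick for the smooth numbers beyond `D`: insert the weight `(d / (D + 1)) ^ η ≥ 1` and
bound the resulting sum by its Euler product, using `p ^ η ≤ z` for `p < T`. -/
lemma smooth_tail_le (T D n : ℕ) (η z : ℝ) (hη : 0 ≤ η) (hη' : η ≤ 1 / 2)
    (hz : (T : ℝ) ^ η ≤ z) :
    ∑ d ∈ smoothIcc T (D + 1) n, 1 / (d : ℝ) ≤
      Real.exp (4 * (z * ∑ p ∈ Nat.primesBelow T, 1 / (p : ℝ))) / ((D : ℝ) + 1) ^ η := by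
  have hD : (0 : ℝ) < (D : ℝ) + 1 := by positivity
  rw [le_div_iff₀ (by positivity)]
  let f : ℕ →* ℝ :=
    { toFun := fun d => (d : ℝ) ^ (η - 1)
      map_one' := by simp
      map_mul' := fun a b => by
        push_cast
        exact Real.mul_rpow (by positivity) (by positivity) }
  have hf : ∀ d, f d = (d : ℝ) ^ (η - 1) := fun d => rfl
  have hf0 : ∀ d, 0 ≤ f d := fun d => by rw [hf]; positivity
  have hfp : ∀ {p : ℕ}, p.Prime → f p ≤ 3 / 4 := by
    intro p hp
    have hp2 : (2 : ℝ) ≤ p := by exact_mod_cast hp.two_le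
    rw [hf]
    calc (p : ℝ) ^ (η - 1) ≤ (p : ℝ) ^ (-(1 / 2) : ℝ) :=
          Real.rpow_le_rpow_of_exponent_le (by linarith) (by linarith)
      _ ≤ (2 : ℝ) ^ (-(1 / 2) : ℝ) :=
          Real.rpow_le_rpow_of_nonpos (by norm_num) hp2 (by norm_num)
      _ ≤ 3 / 4 := by
          rw [Real.rpow_neg (by norm_num), ← Real.sqrt_eq_rpow]
          have : (4 / 3 : ℝ) ≤ Real.sqrt 2 := Real.le_sqrt_of_sq_le (by norm_num)
          calc (Real.sqrt 2)⁻¹ ≤ (4 / 3 : ℝ)⁻¹ := inv_anti₀ (by norm_num) this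
            _ = 3 / 4 := by norm_num
  obtain ⟨hsum, hhas⟩ := EulerProduct.summable_and_hasSum_smoothNumbers_prod_primesBelow_geometric
    (f := f) (fun {p} hp => by
      rw [Real.norm_of_nonneg (hf0 p)]; linarith [hfp hp]) T
  have hfin : ∑ d ∈ smoothIcc T (D + 1) n, f d ≤ ∏ p ∈ T.primesBelow, (1 - f p)⁻¹ := by
    rw [← hhas.tsum_eq]
    classical
    have h := hhas.summable.sum_le_tsum
      ((smoothIcc T (D + 1) n).subtype (· ∈ T.smoothNumbers)) (fun d _ => hf0 d)
    refine le_trans (le_of_eq ?_) h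
    rw [Finset.sum_subtype_of_mem (f := fun d => f d)]
    intro d hd
    exact (mem_smoothIcc.1 hd).2
  calc (∑ d ∈ smoothIcc T (D + 1) n, 1 / (d : ℝ)) * ((D : ℝ) + 1) ^ η
      ≤ ∑ d ∈ smoothIcc T (D + 1) n, f d := by
        rw [Finset.sum_mul]
        refine Finset.sum_le_sum fun d hd => ?_
        have hd' := (mem_smoothIcc.1 hd).1
        have hd0 : (0 : ℝ) < d := by exact_mod_cast (by omega : 0 < d)
        have hDd : (D : ℝ) + 1 ≤ d := by exact_mod_cast hd'.1
        rw [hf, Real.rpow_sub hd0, Real.rpow_one, one_div_mul_eq_div]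
        gcongr
    _ ≤ _ := hfin
    _ ≤ ∏ p ∈ T.primesBelow, Real.exp (4 * (z * (1 / (p : ℝ)))) := by
        apply Finset.prod_le_prod
        · intro p hp
          have := hfp (Nat.prime_of_mem_primesBelow hp)
          exact inv_nonneg.2 (by linarith)
        · intro p hp
          have hpp := Nat.prime_of_mem_primesBelow hp
          have hp0 : (0 : ℝ) < p := by exact_mod_cast hpp.pos
          have h34 := hfp hpp
          have hle : f p ≤ z * (1 / (p : ℝ)) := by
            rw [hf, Real.rpow_sub hp0, Real.rpow_one, mul_one_div]
            gcongr
            refine le_trans ?_ hz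
            apply Real.rpow_le_rpow hp0.le _ hη
            exact_mod_cast (Nat.lt_of_mem_primesBelow hp).le
          have h0 := hf0 p
          calc (1 - f p)⁻¹ ≤ 4 * f p + 1 := by
                rw [inv_le_iff_one_le_mul₀ (by linarith)]
                nlinarith
            _ ≤ Real.exp (4 * f p) := Real.add_one_le_exp _
            _ ≤ _ := Real.exp_le_exp.2 (by linarith)
    _ = _ := by rw [← Real.exp_sum, Finset.mul_sum, Finset.mul_sum]

/-! ### Sums over primes -/

/-- Dyadic form of the Chebyshev–Mertens upper bound, from `primorial x ≤ 4 ^ x`. -/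
lemma sum_primes_dyadic_le (K : ℕ) :
    ∑ p ∈ Nat.primesBelow (2 ^ (K + 1)), 1 / (p : ℝ) ≤ 4 * ∑ k ∈ Finset.Icc 1 K, 1 / (k : ℝ) := by
  induction K with
  | zero =>
    have : Nat.primesBelow (2 ^ (0 + 1)) = ∅ := by decide
    rw [this]; simp
  | succ K ih =>
    set B := Nat.primesBelow (2 ^ (K + 1 + 1)) \ Nat.primesBelow (2 ^ (K + 1)) with hB
    have hBmem : ∀ p ∈ B, p.Prime ∧ 2 ^ (K + 1) ≤ p ∧ p < 2 ^ (K + 1 + 1) := by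
      intro p hp
      obtain ⟨h1, h2⟩ := Finset.mem_sdiff.1 hp
      have h1 := Nat.mem_primesBelow.1 h1
      refine ⟨h1.2, ?_, h1.1⟩
      by_contra! h
      exact h2 (Nat.mem_primesBelow.2 ⟨h, h1.2⟩)
    have hsub : Nat.primesBelow (2 ^ (K + 1)) ⊆ Nat.primesBelow (2 ^ (K + 1 + 1)) := by
      intro p hp
      have := Nat.mem_primesBelow.1 hp
      exact Nat.mem_primesBelow.2
        ⟨this.1.trans (Nat.pow_lt_pow_right (by norm_num) (Nat.lt_succ_self _)), this.2⟩
    have hcard : (K + 1) * B.card ≤ 4 * 2 ^ (K + 1) := by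
      have h1 : (2 ^ (K + 1)) ^ B.card ≤ ∏ p ∈ B, p :=
        Finset.pow_card_le_prod _ _ _ (fun p hp => (hBmem p hp).2.1)
      have h2 : ∏ p ∈ B, p ≤ primorial (2 ^ (K + 1 + 1)) := by
        unfold primorial
        apply Finset.prod_le_prod_of_subset_of_one_le'
        · intro p hp
          have := hBmem p hp
          simp only [Finset.mem_filter, Finset.mem_range]
          exact ⟨by omega, this.1⟩
        · intro p hp _
          exact (Finset.mem_filter.1 hp).2.one_lt.le
      have h3 := h1.trans (h2.trans (primorial_le_four_pow _))
      rw [← pow_mul, show (4 : ℕ) = 2 ^ 2 by norm_num, ← pow_mul] at h3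
      have h4 := (Nat.pow_le_pow_iff_right (by norm_num)).1 h3
      calc _ ≤ _ := h4
        _ = _ := by ring
    have hBsum : ∑ p ∈ B, 1 / (p : ℝ) ≤ 4 * (1 / ((K + 1 : ℕ) : ℝ)) := by
      calc ∑ p ∈ B, 1 / (p : ℝ) ≤ ∑ p ∈ B, 1 / ((2 : ℝ) ^ (K + 1)) := by
            refine Finset.sum_le_sum fun p hp => ?_
            apply one_div_le_one_div_of_le (by positivity)
            exact_mod_cast (hBmem p hp).2.1
        _ = B.card * (1 / ((2 : ℝ) ^ (K + 1))) := by rw [Finset.sum_const, nsmul_eq_mul]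
        _ ≤ _ := by
            rw [mul_one_div, mul_one_div, div_le_div_iff₀ (by positivity) (by positivity)]
            rw [mul_comm]
            exact_mod_cast hcard
    rw [← Finset.sum_sdiff hsub, Finset.sum_Icc_succ_top (by omega), mul_add, add_comm]
    exact add_le_add ih hBsum

/-- A Mertens-type upper bound: `∑_{p < T} 1/p = O(log log T)`. -/
lemma sum_primes_inv_le (T : ℕ) (Y : ℝ) (hY : 1 ≤ Y) (hT : Real.log T ≤ Y) :
    ∑ p ∈ Nat.primesBelow T, 1 / (p : ℝ) ≤ 4 * (1 + Real.log (2 * Y)) := by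
  set K := Nat.log 2 T with hK
  have h1 : ∑ p ∈ Nat.primesBelow T, 1 / (p : ℝ) ≤
      ∑ p ∈ Nat.primesBelow (2 ^ (K + 1)), 1 / (p : ℝ) := by
    apply Finset.sum_le_sum_of_subset_of_nonneg
    · intro p hp
      have := Nat.mem_primesBelow.1 hp
      exact Nat.mem_primesBelow.2 ⟨this.1.trans (Nat.lt_pow_succ_log_self (by norm_num) T), this.2⟩
    · intro p _ _; positivity
  refine h1.trans ((sum_primes_dyadic_le K).trans ?_)
  refine mul_le_mul_of_nonneg_left ?_ (by norm_num)
  have h2 : ∑ k ∈ Finset.Icc 1 K, 1 / (k : ℝ) ≤ 1 + Real.log K := by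
    have := harmonic_le_one_add_log K
    rw [harmonic_eq_sum_Icc] at this
    push_cast at this
    simpa [one_div] using this
  refine h2.trans (add_le_add le_rfl ?_)
  rcases Nat.eq_zero_or_pos K with h0 | h0
  · rw [h0]; simp only [Nat.cast_zero, Real.log_zero]
    exact Real.log_nonneg (by linarith)
  · apply Real.log_le_log (by exact_mod_cast h0)
    have hT0 : T ≠ 0 := by
      rintro rfl
      simp [hK] at h0
    have h3 : ((2 : ℝ) ^ K) ≤ T := by exact_mod_cast Nat.pow_log_le_self 2 hT0
    have h4 := Real.log_le_log (by positivity) h3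
    rw [Real.log_pow] at h4
    have := Real.log_two_gt_d9
    have hK0 : (0 : ℝ) ≤ K := by positivity
    nlinarith

/-! ### Choice of parameters -/

open Filter Asymptotics in
/-- The growth conditions on `L = log n` needed for the choice of parameters. -/
lemma eventually_params (ε c : ℝ) (hε : 0 < ε) (hε' : ε < 1 / 6) (hc : 0 < c) :
    ∀ᶠ L : ℝ in atTop, 18 ≤ L ∧ 2 ≤ Real.log L ∧ Real.log L ≤ c * L ∧ Real.log L ≤ L / 54 ∧
      16 * L ^ (1 / 2 - ε) * (2 + Real.log L) + 3 * Real.log L + 3 ≤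
        4 * ε * (Real.sqrt c * Real.sqrt L) := by
  set θ : ℝ := 4 * ε * Real.sqrt c / 38 with hθ
  have hθ0 : 0 < θ := by positivity
  have h1 := (isLittleO_log_rpow_atTop hε).bound hθ0
  have hlog : ∀ δ : ℝ, 0 < δ → ∀ᶠ L : ℝ in atTop, Real.log L ≤ δ * L := by
    intro δ hδ
    filter_upwards [Real.isLittleO_log_id_atTop.bound hδ, eventually_ge_atTop 1] with L hL h1
    rw [Real.norm_of_nonneg (Real.log_nonneg h1)] at hL
    simpa [abs_of_nonneg (zero_le_one.trans h1)] using hL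
  filter_upwards [h1, hlog c hc, hlog (1 / 54) (by norm_num), eventually_ge_atTop 18,
    Real.tendsto_log_atTop.eventually_ge_atTop 2] with L h1 h2 h3 h18 hl2
  have hL0 : (0 : ℝ) < L := by linarith
  refine ⟨h18, hl2, h2, by linarith, ?_⟩
  rw [Real.norm_of_nonneg (by linarith), Real.norm_of_nonneg (by positivity)] at h1
  have hsq : Real.sqrt L = L ^ (1 / 2 - ε) * L ^ ε := by
    rw [← Real.rpow_add hL0, Real.sqrt_eq_rpow]; congr 1; ring
  have hle : L ^ ε ≤ Real.sqrt L := by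
    rw [Real.sqrt_eq_rpow]
    exact Real.rpow_le_rpow_of_exponent_le (by linarith) (by linarith)
  have hp : 0 ≤ L ^ (1 / 2 - ε) := by positivity
  have e1 : L ^ (1 / 2 - ε) * Real.log L ≤ θ * Real.sqrt L := by
    rw [hsq]
    calc _ ≤ L ^ (1 / 2 - ε) * (θ * L ^ ε) := mul_le_mul_of_nonneg_left h1 hp
      _ = _ := by ring
  have e2 : L ^ (1 / 2 - ε) * 2 ≤ L ^ (1 / 2 - ε) * Real.log L := mul_le_mul_of_nonneg_left hl2 hp
  have e3 : Real.log L ≤ θ * Real.sqrt L := h1.trans (mul_le_mul_of_nonneg_left hle hθ0.le)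
  have e4 : 38 * (θ * Real.sqrt L) = 4 * ε * (Real.sqrt c * Real.sqrt L) := by
    rw [hθ]; ring
  nlinarith

set_option maxHeartbeats 1000000 in
/-- With parameters chosen in terms of `n`, `log Q(n')` is approximated by a multiple of `n'`
depending only on `n`, uniformly in `n' ≥ n`. -/
lemma log_Q_uniform (ε : ℝ) (hε : 0 < ε) (hε' : ε < 1 / 6) :
    ∃ A : ℕ → ℝ, ∃ N : ℕ, ∀ n : ℕ, N ≤ n → ∀ n' : ℕ, n ≤ n' →
      |Real.log (Q n') - n' * A n| ≤
        n' * (4 * Real.exp (-Real.sqrt ((1 / 6 - ε) * Real.log n * Real.log (Real.log n)))) := by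
  have hc : 0 < 1 / 6 - ε := by linarith
  have hev := (Real.tendsto_log_atTop.comp tendsto_natCast_atTop_atTop).eventually
    (eventually_params ε (1 / 6 - ε) hε hε' hc)
  obtain ⟨N, hN⟩ := Filter.eventually_atTop.1 hev
  suffices h : ∀ n : ℕ, N ≤ n → ∃ A : ℝ, ∀ n' : ℕ, n ≤ n' →
      |Real.log (Q n') - n' * A| ≤
        n' * (4 * Real.exp (-Real.sqrt ((1 / 6 - ε) * Real.log n * Real.log (Real.log n)))) by
    choose! A hA using h
    exact ⟨A, N, hA⟩
  intro n hn
  have hpar := hN n hn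
  simp only [Function.comp] at hpar
  set L := Real.log n with hL
  set l := Real.log L with hl
  obtain ⟨h18, hl2, hlc, hl54, hmain⟩ := hpar
  set c := 1 / 6 - ε with hcdef
  set X := Real.sqrt (c * L * l) with hX
  have hL0 : 0 < L := by linarith
  have hl0 : 0 < l := by linarith
  have hn0 : (0 : ℝ) < n := by
    rcases Nat.eq_zero_or_pos n with h | h
    · rw [hL, h] at hL0; simp at hL0
    · exact_mod_cast h
  have hX0 : 0 ≤ X := Real.sqrt_nonneg _
  have hXsq : X ^ 2 = c * L * l := Real.sq_sqrt (by positivity)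
  have hlX : l ≤ X := by
    apply Real.le_sqrt_of_sq_le
    nlinarith
  have hXL : X ≤ L / 18 := by
    apply Real.sqrt_le_iff.2
    refine ⟨by positivity, ?_⟩
    have h1 : c * L * l ≤ 1 / 6 * L * (L / 54) := by
      have : c ≤ 1 / 6 := by linarith
      gcongr
    nlinarith
  have hXlow : Real.sqrt c * Real.sqrt L ≤ X := by
    rw [← Real.sqrt_mul hc.le]
    apply Real.sqrt_le_sqrt
    have : 0 < c * L := by positivity
    nlinarith
  -- `T ≈ e^X`, `D ≈ n^{1/3}`, Rankin weight `z = (log n)^{1/2 - ε}` with `T^η ≤ z`, and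
  -- `u ≈ log (n^{1/3}) / log T`, from which the sieve truncation is `r = u - 3`
  set T := ⌈Real.exp X⌉₊ with hT
  set D := ⌊Real.exp (L / 3)⌋₊ with hD
  set lam := (1 / 2 - ε) * l with hlam
  set z := Real.exp lam with hz
  set η := lam / (X + 1) with hη
  set u := ⌊L / 3 / (X + 1)⌋₊ with hu
  have hlam0 : 0 ≤ lam := by
    have : 0 ≤ 1 / 2 - ε := by linarith
    positivity
  have hlaml : lam ≤ l / 2 := by rw [hlam]; nlinarith
  have hTlow : Real.exp X ≤ T := Nat.le_ceil _
  have hT1 : 1 ≤ T := Nat.one_le_ceil_iff.2 (Real.exp_pos X)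
  have hT0 : (0 : ℝ) < T := by exact_mod_cast hT1
  have hTup : (T : ℝ) ≤ Real.exp (X + 1) := by
    have h1 : (T : ℝ) < Real.exp X + 1 := Nat.ceil_lt_add_one (Real.exp_pos X).le
    have h2 : 1 ≤ Real.exp X := Real.one_le_exp hX0
    have h3 : 2 ≤ Real.exp 1 := by have := Real.add_one_le_exp (1 : ℝ); linarith
    rw [Real.exp_add]
    nlinarith
  have hDup : (D : ℝ) ≤ Real.exp (L / 3) := Nat.floor_le (Real.exp_pos _).le
  have hDlow : Real.exp (L / 3) ≤ (D : ℝ) + 1 := (Nat.lt_floor_add_one _).le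
  have hD1 : 1 ≤ D := (Nat.one_le_floor_iff _).2 (Real.one_le_exp (by positivity))
  have hlogD : Real.log D ≤ L := by
    have h0 : (0 : ℝ) < D := by exact_mod_cast hD1
    rw [Real.log_le_iff_le_exp h0]
    exact hDup.trans (Real.exp_le_exp.2 (by linarith))
  have hu3 : 3 ≤ u := by
    apply Nat.le_floor
    rw [le_div_iff₀ (by linarith)]
    push_cast
    linarith
  obtain ⟨r, hr⟩ : ∃ r, u = r + 3 := ⟨u - 3, by omega⟩
  have hr_up : ((r : ℝ) + 3) * (X + 1) ≤ L / 3 := by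
    have : (u : ℝ) ≤ L / 3 / (X + 1) := Nat.floor_le (by positivity)
    rw [le_div_iff₀ (by linarith), hr] at this
    push_cast at this
    exact this
  have hr_low : L / 3 / (X + 1) - 3 ≤ (r : ℝ) + 1 := by
    have : L / 3 / (X + 1) < (u : ℝ) + 1 := Nat.lt_floor_add_one _
    rw [hr] at this
    push_cast at this
    linarith
  set S := ∑ p ∈ Nat.primesBelow T, 1 / (p : ℝ) with hS
  have hS0 : 0 ≤ S := Finset.sum_nonneg fun p _ => by positivity
  have hSle : S ≤ 4 * (2 + l) := by
    have h1 : Real.log T ≤ L := by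
      rw [Real.log_le_iff_le_exp hT0]
      exact hTup.trans (Real.exp_le_exp.2 (by linarith))
    refine (sum_primes_inv_le T L (by linarith) h1).trans ?_
    rw [Real.log_mul (by norm_num) hL0.ne']
    have := Real.log_two_lt_d9
    linarith
  have hzL : z = L ^ (1 / 2 - ε) := by
    rw [hz, hlam, Real.rpow_def_of_pos hL0, mul_comm]
  have hzS : 4 * (z * S) ≤ 16 * L ^ (1 / 2 - ε) * (2 + l) := by
    rw [← hzL]
    have : z * S ≤ z * (4 * (2 + l)) := mul_le_mul_of_nonneg_left hSle (Real.exp_pos _).le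
    linarith
  -- the saving from Rankin's trick, in both places where it is used
  set U := L / 3 * η with hU
  have hUX : (1 + 4 * ε) * (X - 1) ≤ U := by
    have h1 : (1 + 4 * ε) * X ^ 2 ≤ L / 3 * lam := by
      rw [hXsq, hlam]
      have : 0 < L * l := by positivity
      have h2 : (1 + 4 * ε) * c ≤ (1 / 2 - ε) / 3 := by
        rw [hcdef]; linarith [sq_nonneg ε]
      calc (1 + 4 * ε) * (c * L * l) = ((1 + 4 * ε) * c) * (L * l) := by ring
        _ ≤ ((1 / 2 - ε) / 3) * (L * l) := mul_le_mul_of_nonneg_right h2 this.le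
        _ = _ := by ring
    rw [hU, hη, ← mul_div_assoc, le_div_iff₀ (by linarith)]
    have e : (1 + 4 * ε) * (X - 1) * (X + 1) = (1 + 4 * ε) * X ^ 2 - (1 + 4 * ε) := by ring
    linarith
  have hsave : X + 4 * (z * S) + 3 * l + 1 ≤ U := by
    have h1 : 4 * ε * (Real.sqrt c * Real.sqrt L) ≤ 4 * ε * X :=
      mul_le_mul_of_nonneg_left hXlow (by linarith)
    have e : (1 + 4 * ε) * (X - 1) = X + 4 * ε * X - 1 - 4 * ε := by ring
    linarith
  have hzS0 : 0 ≤ z * S := by positivity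
  refine ⟨mainConst T D r, fun n' hn' => ?_⟩
  have hnn' : (n : ℝ) ≤ n' := by exact_mod_cast hn'
  have hn'0 : (0 : ℝ) < n' := hn0.trans_le hnn'
  refine (log_Q_approx T D r n' hT1 hD1).trans ?_
  -- the discarded `k ≤ n' / T`
  have t1 : (n' : ℝ) / T ≤ n' * Real.exp (-X) := by
    rw [Real.exp_neg, ← div_eq_mul_inv]
    gcongr
  -- the discarded smooth parts exceeding `D`
  have t2 : ∑ d ∈ smoothIcc T (D + 1) n', 1 / (d : ℝ) ≤ Real.exp (-X) := by
    have hη0 : 0 ≤ η := by positivity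
    have hη2 : η ≤ 1 / 2 := by
      rw [hη, div_le_iff₀ (by linarith)]; linarith
    have hTz : (T : ℝ) ^ η ≤ z := by
      calc (T : ℝ) ^ η ≤ (Real.exp (X + 1)) ^ η := Real.rpow_le_rpow hT0.le hTup hη0
        _ = Real.exp ((X + 1) * η) := (Real.exp_mul _ _).symm
        _ = z := by
          rw [hη, mul_div_cancel₀ _ (by linarith : X + 1 ≠ 0)]
    refine (smooth_tail_le T D n' η z hη0 hη2 hTz).trans ?_
    have hDη : Real.exp U ≤ ((D : ℝ) + 1) ^ η := by
      rw [hU, Real.exp_mul]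
      exact Real.rpow_le_rpow (Real.exp_pos _).le hDlow hη0
    calc _ ≤ Real.exp (4 * (z * S)) / Real.exp U := by gcongr
      _ = Real.exp (4 * (z * S) - U) := (Real.exp_sub _ _).symm
      _ ≤ _ := Real.exp_le_exp.2 (by linarith)
  -- the unit rounding errors of the sieve
  have t3 : (D : ℝ) ^ 2 * (T : ℝ) ^ (r + 2) ≤ n' * Real.exp (-X) := by
    calc (D : ℝ) ^ 2 * (T : ℝ) ^ (r + 2)
        ≤ (Real.exp (L / 3)) ^ 2 * (Real.exp (X + 1)) ^ (r + 2) := by gcongr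
      _ = Real.exp (2 * (L / 3) + ((r : ℝ) + 2) * (X + 1)) := by
          rw [← Real.exp_nat_mul, ← Real.exp_nat_mul, ← Real.exp_add]
          push_cast; rfl
      _ ≤ Real.exp (L + -X) := Real.exp_le_exp.2 (by linarith)
      _ = n * Real.exp (-X) := by rw [Real.exp_add, hL, Real.exp_log hn0]
      _ ≤ _ := by gcongr
  -- the sieve truncation
  have t4 : (1 + Real.log D) * sieveTail T r ≤ Real.exp (-X) := by
    have h1 : 1 + Real.log D ≤ Real.exp (l + 1) := by
      rw [Real.exp_add, hl, Real.exp_log hL0]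
      have := Real.add_one_le_exp (1 : ℝ)
      nlinarith
    have h2 : Real.exp (U - 3 * lam) ≤ z ^ (r + 1) := by
      rw [hz, ← Real.exp_nat_mul]
      apply Real.exp_le_exp.2
      have : U = L / 3 / (X + 1) * lam := by rw [hU, hη]; ring
      rw [this]
      have := mul_le_mul_of_nonneg_right hr_low hlam0
      push_cast
      linarith
    calc (1 + Real.log D) * sieveTail T r
        ≤ Real.exp (l + 1) * (Real.exp (z * S) / Real.exp (U - 3 * lam)) := by
          apply mul_le_mul h1 _ (sieveTail_nonneg T r) (Real.exp_pos _).le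
          refine (sieveTail_le T r z (Real.exp_pos _)).trans ?_
          gcongr
      _ = Real.exp (l + 1 + (z * S - (U - 3 * lam))) := by
          rw [← Real.exp_sub, ← Real.exp_add]
      _ ≤ _ := Real.exp_le_exp.2 (by linarith)
  have t2' := mul_le_mul_of_nonneg_left t2 hn'0.le
  have t4' := mul_le_mul_of_nonneg_left t4 hn'0.le
  linarith

/-! ### The growth rate -/

open Filter in
lemma tendsto_error (ε : ℝ) (hε' : ε < 1 / 6) :
    Tendsto (fun n : ℕ => 4 * Real.exp (-Real.sqrt ((1 / 6 - ε) * Real.log n *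
      Real.log (Real.log n)))) atTop (nhds 0) := by
  have hlog : Tendsto (fun n : ℕ => Real.log n) atTop atTop :=
    Real.tendsto_log_atTop.comp tendsto_natCast_atTop_atTop
  have h1 : Tendsto (fun n : ℕ => (1 / 6 - ε) * Real.log n * Real.log (Real.log n)) atTop atTop :=
    (hlog.const_mul_atTop (by linarith)).atTop_mul_atTop₀ (Real.tendsto_log_atTop.comp hlog)
  have h2 := Real.tendsto_exp_neg_atTop_nhds_zero.comp (Real.tendsto_sqrt_atTop.comp h1)
  simpa using h2.const_mul 4

open Filter in
/-- A sequence that is approximately linear beyond every large `n`, with relative error tending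
to `0`, has a linear growth rate. -/
lemma exists_growth_rate (F A E : ℕ → ℝ) (N : ℕ) (hE : Tendsto E atTop (nhds 0))
    (h : ∀ n, N ≤ n → ∀ n', n ≤ n' → |F n' - n' * A n| ≤ n' * E n) :
    ∃ l, Tendsto (fun n : ℕ => F n / n) atTop (nhds l) := by
  apply cauchySeq_tendsto_of_complete
  rw [Metric.cauchySeq_iff']
  intro δ hδ
  obtain ⟨M, hM⟩ := eventually_atTop.1 (hE.eventually_lt_const (half_pos hδ))
  set m := max (max N M) 1 with hm
  have hdiv : ∀ n', m ≤ n' → |F n' / n' - A m| < δ / 2 := by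
    intro n' hn'
    have hpos : (0 : ℝ) < n' := by
      have : 1 ≤ n' := (le_max_right _ _).trans hn'
      exact_mod_cast this
    have h1 := h m (by omega) n' hn'
    have h2 := hM m (by omega)
    have e : F n' / n' - A m = (F n' - n' * A m) / n' := by field_simp
    rw [e, abs_div, abs_of_pos hpos, div_lt_iff₀ hpos]
    nlinarith
  refine ⟨m, fun n' hn' => ?_⟩
  rw [Real.dist_eq]
  have h1 := abs_lt.1 (hdiv n' hn')
  have h2 := abs_lt.1 (hdiv m le_rfl)
  rw [abs_lt]
  constructor <;> linarith [h1.1, h1.2, h2.1, h2.2]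

open Filter in
/-- Letting `n' → ∞` gives `|l - A n| ≤ E n`; combine this with the approximation at `n' = n`. -/
lemma growth_rate_error (F A E : ℕ → ℝ) (N : ℕ) (l : ℝ)
    (hl : Tendsto (fun n : ℕ => F n / n) atTop (nhds l))
    (h : ∀ n, N ≤ n → ∀ n', n ≤ n' → |F n' - n' * A n| ≤ n' * E n) (n : ℕ) (hn : N ≤ n) :
    |F n - n * l| ≤ 2 * n * E n := by
  have h1 : |l - A n| ≤ E n := by
    refine le_of_tendsto ((hl.sub_const (A n)).abs) ?_
    filter_upwards [eventually_ge_atTop (max n 1)] with n' hn'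
    have hpos : (0 : ℝ) < n' := by
      have : 1 ≤ n' := (le_max_right _ _).trans hn'
      exact_mod_cast this
    have h1 := h n hn n' ((le_max_left _ _).trans hn')
    have e : F n' / n' - A n = (F n' - n' * A n) / n' := by field_simp
    rw [e, abs_div, abs_of_pos hpos, div_le_iff₀ hpos]
    linarith
  have h2 := abs_le.1 (h n hn n le_rfl)
  have h3 := abs_le.1 h1
  have hn0 : (0 : ℝ) ≤ n := by positivity
  rw [abs_le]
  constructor <;> nlinarith [h2.1, h2.2, h3.1, h3.2]

theorem primitive_count_asymptotic :
    ∃ α : ℝ, 1 < α ∧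
      Filter.Tendsto (fun n : ℕ => (Q n : ℝ) ^ ((n : ℝ)⁻¹)) Filter.atTop (nhds α) ∧
      ∀ ε : ℝ, 0 < ε → ε < 1 / 6 →
        ∃ K : ℝ, 0 < K ∧ ∃ N : ℕ, ∀ n : ℕ, N ≤ n →
          |Real.log (Q n) - (n : ℝ) * Real.log α| ≤
            K * n * Real.exp (-Real.sqrt ((1 / 6 - ε) * Real.log n * Real.log (Real.log n))) := by
  -- the growth rate does not depend on `ε`, so any admissible value produces it
  obtain ⟨A, N, hA⟩ := log_Q_uniform (1 / 12) (by norm_num) (by norm_num)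
  obtain ⟨l, hl⟩ := exists_growth_rate (fun n => Real.log (Q n)) A _ N
    (tendsto_error (1 / 12) (by norm_num)) hA
  refine ⟨Real.exp l, ?_, ?_, ?_⟩
  · rw [Real.one_lt_exp_iff]
    have hlog2 : 0 < Real.log 2 := Real.log_pos (by norm_num)
    have : Real.log 2 / 2 ≤ l := by
      refine ge_of_tendsto hl ?_
      filter_upwards [Filter.eventually_ge_atTop 1] with n hn
      have hpos : (0 : ℝ) < n := by exact_mod_cast hn
      rw [le_div_iff₀ hpos]
      have := log_Q_ge n
      linarith
    linarith
  · refine ((Real.continuous_exp.tendsto l).comp hl).congr fun n => ?_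
    have hQ : (0 : ℝ) < Q n := by
      rw [Q_eq_primCount]; exact_mod_cast primCount_pos _
    rw [Function.comp, Real.rpow_def_of_pos hQ, div_eq_mul_inv]
  · intro ε hε hε'
    obtain ⟨A', N', hA'⟩ := log_Q_uniform ε hε hε'
    refine ⟨8, by norm_num, N', fun n hn => ?_⟩
    have := growth_rate_error (fun n => Real.log (Q n)) A' _ N' l hl hA' n hn
    rw [Real.log_exp]
    refine this.trans (le_of_eq ?_)
    ring
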